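/- Let q ≥ 2 be an integer and 1 − 1/(2q) < H < 1. Then there exist a constant c_{2,q,H} > 0 (depending only on q and H) and a random variable Z with E Z² = 1 such that V_n/(c_{2,q,H} n^{1−q(1−H)}) converges to Z in L²(Ω) as n → ∞. -/

import Mathlib

open MeasureTheory ProbabilityTheory Filter Real Topology

/-- A (centered) fractional Brownian motion with Hurst parameter `H`:
all finite-dimensional distributions are centered Gaussian (equivalently, every finite
linear combination of values of the process is a centered real Gaussian), with covariance
`E (B s * B t) = (s^(2H) + t^(2H) - |t-s|^(2H)) / 2` for nonnegative times. -/
structure IsFractionalBrownianMotion {Ω : Type*} [MeasureSpace Ω]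
    (B : ℝ → Ω → ℝ) (H : ℝ) : Prop where
  measurable : ∀ t : ℝ, Measurable (B t)
  gaussian_fdd : ∀ (n : ℕ) (t : Fin n → ℝ), (∀ i, 0 ≤ t i) → ∀ c : Fin n → ℝ,
    ∃ v : NNReal,
      Measure.map (fun ω => ∑ i, c i * B (t i) ω) (ℙ : Measure Ω) = gaussianReal 0 v
  covariance : ∀ s t : ℝ, 0 ≤ s → 0 ≤ t →
    ∫ ω, B s ω * B t ω ∂(ℙ : Measure Ω)
      = (s ^ (2 * H) + t ^ (2 * H) - |t - s| ^ (2 * H)) / 2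

/-- `V_n = ∑_{k=0}^{n-1} H_q (n^H (B_{(k+1)/n} - B_{k/n}))`, where `H_q` is the Hermite
polynomial of degree `q`. -/
noncomputable def hermiteVariation {Ω : Type*} [MeasureSpace Ω]
    (B : ℝ → Ω → ℝ) (H : ℝ) (q n : ℕ) (ω : Ω) : ℝ :=
  ∑ k ∈ Finset.range n,
    Polynomial.aeval
      ((n : ℝ) ^ H * (B (((k : ℝ) + 1) / n) ω - B ((k : ℝ) / n) ω))
      (Polynomial.hermite q)

/-!
Write `U_n = V_n / n ^ (1 - q (1 - H))`. For standard Gaussian `X`, `Y` that are jointly Gaussian,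
`E [H_q(X) H_q(Y)] = q! E[X Y] ^ q`, because `Y - E[X Y] X` is independent of `X` and Gaussian
integration by parts moves `H_q(X)` onto `q` derivatives of the other factor. The covariance of two
increments of `B` is `H (2H - 1)` times the integral of `|x - y| ^ (2H - 2)` over a rectangle, so
`E [U_n U_m]` is `q! (H (2H - 1)) ^ q` times the integral over the unit square of the `q`-th power
of a step function: the averages of `|x - y| ^ (2H - 2)` over the cells of an `n × m` grid. These
averages are at most a constant times `|x - y| ^ (2H - 2)`, uniformly in the grid, even on cells
that meet the diagonal, and `|x - y| ^ ((2H - 2) q)` is integrable exactly because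
`H > 1 - 1 / (2q)`. By dominated convergence `E [U_n U_m]` has a limit as `n` and `m` tend to
infinity independently, which makes `U_n` a Cauchy sequence in `L²`.
-/

/-! ### Convergence in `L²` from convergence of inner products -/

theorem cauchySeq_of_tendsto_inner {𝕜 E ι : Type*} [RCLike 𝕜] [SeminormedAddCommGroup E]
    [InnerProductSpace 𝕜 E] [Nonempty ι] [SemilatticeSup ι] {f : ι → E} {A : 𝕜}
    (hf : Tendsto (fun p : ι × ι => inner 𝕜 (f p.1) (f p.2)) atTop (𝓝 A)) : CauchySeq f := by
  rw [cauchySeq_iff_tendsto_dist_atTop_0]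
  have hre : Tendsto (fun p : ι × ι => RCLike.re (inner 𝕜 (f p.1) (f p.2))) atTop
      (𝓝 (RCLike.re A)) := (RCLike.continuous_re.tendsto A).comp hf
  have hdiag : Tendsto (fun i => RCLike.re (inner 𝕜 (f i) (f i))) atTop (𝓝 (RCLike.re A)) :=
    hre.comp tendsto_atTop_diagonal
  have hsq : Tendsto (fun p : ι × ι => dist (f p.1) (f p.2) ^ 2) atTop
      (𝓝 (RCLike.re A - 2 * RCLike.re A + RCLike.re A)) := by
    simp only [dist_eq_norm, norm_sub_sq (𝕜 := 𝕜), ← inner_self_eq_norm_sq (𝕜 := 𝕜)]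
    rw [← prod_atTop_atTop_eq] at hre ⊢
    exact ((hdiag.comp tendsto_fst).sub (hre.const_mul 2)).add (hdiag.comp tendsto_snd)
  have hzero : RCLike.re A - 2 * RCLike.re A + RCLike.re A = 0 := by ring
  simpa [hzero, Real.sqrt_sq dist_nonneg] using hsq.sqrt

theorem exists_tendsto_eLpNorm_of_tendsto_integral_mul {α : Type*} {m : MeasurableSpace α}
    {μ : Measure α} {U : ℕ → α → ℝ} (hU : ∀ n, MemLp (U n) 2 μ) {A : ℝ}
    (hA : Tendsto (fun p : ℕ × ℕ => ∫ x, U p.1 x * U p.2 x ∂μ) atTop (𝓝 A)) :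
    ∃ Z : α → ℝ, ∫ x, Z x ^ 2 ∂μ = A ∧
      Tendsto (fun n => eLpNorm (U n - Z) 2 μ) atTop (𝓝 0) := by
  let f n : Lp ℝ 2 μ := (hU n).toLp (U n)
  have hinner : ∀ i j, inner ℝ (f i) (f j) = ∫ x, U i x * U j x ∂μ := by
    intro i j
    rw [L2.inner_def]
    refine integral_congr_ae ?_
    filter_upwards [(hU i).coeFn_toLp, (hU j).coeFn_toLp] with x hi hj
    simp [f, hi, hj, mul_comm]
  have hf : Tendsto (fun p : ℕ × ℕ => inner ℝ (f p.1) (f p.2)) atTop (𝓝 A) := by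
    simpa only [hinner] using hA
  obtain ⟨Z, hZ⟩ := cauchySeq_tendsto_of_complete (cauchySeq_of_tendsto_inner hf)
  refine ⟨Z, ?_, (Lp.tendsto_Lp_iff_tendsto_eLpNorm'' U hU Z (Lp.memLp Z)).1 (by simpa using hZ)⟩
  rw [← tendsto_nhds_unique (hZ.inner hZ) (hf.comp tendsto_atTop_diagonal), L2.inner_def]
  simp [sq]

/-! ### Covariance of Hermite polynomials of Gaussian variables -/

section Gaussian

open Polynomial

theorem memLp_two_eval {Ω : Type*} [MeasurableSpace Ω] {μ : Measure Ω} [IsFiniteMeasure μ]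
    {X : Ω → ℝ} (hX : ∀ k : ℕ, MemLp X k μ) (f : ℝ[X]) :
    MemLp (fun ω => f.eval (X ω)) 2 μ := by
  have hpow : ∀ j : ℕ, MemLp (fun ω => X ω ^ j) 2 μ := fun j => by
    rw [memLp_two_iff_integrable_sq_norm (by exact (hX 0).1.pow j)]
    simpa only [norm_pow, ← pow_mul] using (hX (j * 2)).integrable_norm_pow'
  simp only [eval_eq_sum_range]
  exact memLp_finsetSum _ fun j _ => (hpow j).const_mul _

theorem hasDerivAt_gaussianPDFReal (m : ℝ) (v : NNReal) (x : ℝ) :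
    HasDerivAt (gaussianPDFReal m v) (-((x - m) / v) * gaussianPDFReal m v x) x := by
  have h : HasDerivAt (fun y : ℝ => -(y - m) ^ 2 / (2 * v)) (-((x - m) / v)) x := by
    refine ((((hasDerivAt_id x).sub_const m).pow 2).neg.div_const (2 * (v : ℝ))).congr_deriv ?_
    simp only [id]
    ring
  rw [gaussianPDFReal_def]
  refine (h.exp.const_mul (√(2 * π * v))⁻¹).congr_deriv ?_
  ring

theorem integral_sub_mul_gaussianReal {m : ℝ} {v : NNReal} {f f' : ℝ → ℝ}
    (hf : ∀ x, HasDerivAt f (f' x) x) (hfi : Integrable f (gaussianReal m v))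
    (hf'i : Integrable f' (gaussianReal m v))
    (hxf : Integrable (fun x => (x - m) * f x) (gaussianReal m v)) :
    ∫ x, (x - m) * f x ∂gaussianReal m v = v * ∫ x, f' x ∂gaussianReal m v := by
  rcases eq_or_ne v 0 with rfl | hv
  · simp
  have hv' : (v : ℝ) ≠ 0 := by exact_mod_cast hv
  have hint : ∀ {g : ℝ → ℝ}, Integrable g (gaussianReal m v) →
      Integrable (fun x => g x * gaussianPDFReal m v x) := fun {g} hg => by
    rw [gaussianReal_of_var_ne_zero m hv, integrable_withDensity_iff_integrable_smul₀'
      (measurable_gaussianPDF m v).aemeasurable (by simp [gaussianPDF])] at hg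
    simpa [toReal_gaussianPDF, mul_comm] using hg
  have hparts := integral_mul_deriv_eq_deriv_mul_of_integrable (fun x _ => hf x)
    (fun x _ => hasDerivAt_gaussianPDFReal m v x)
    ((hint (hxf.const_mul (-(v : ℝ)⁻¹))).congr (.of_forall fun x => by simp; ring))
    (hint hf'i) (hint hfi)
  simp only [integral_gaussianReal_eq_integral_smul hv, smul_eq_mul]
  calc ∫ x, gaussianPDFReal m v x * ((x - m) * f x)
      = -v * ∫ x, f x * (-((x - m) / v) * gaussianPDFReal m v x) := by
        rw [← integral_const_mul]
        congr with x
        field_simp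
    _ = v * ∫ x, gaussianPDFReal m v x * f' x := by
        rw [hparts, neg_mul_neg]
        simp only [mul_comm]

theorem integrable_eval_gaussianReal (m : ℝ) (v : NNReal) (f : ℝ[X]) :
    Integrable (fun x => f.eval x) (gaussianReal m v) :=
  (memLp_two_eval (fun k => memLp_id_gaussianReal' k (by simp)) f).integrable one_le_two

theorem integral_hermite_mul_gaussianReal (q : ℕ) (f : ℝ[X]) :
    ∫ x, aeval x (hermite q) * f.eval x ∂gaussianReal 0 1
      = ∫ x, (derivative^[q] f).eval x ∂gaussianReal 0 1 := by
  induction q generalizing f with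
  | zero => simp
  | succ q ih =>
    set h : ℝ[X] := (hermite q).map (algebraMap ℤ ℝ) with hh
    have hherm : (hermite (q + 1)).map (algebraMap ℤ ℝ) = X * h - derivative h := by
      simp [hermite_succ, hh, derivative_map]
    have hXhf : Integrable (fun x => (x - 0) * (h * f).eval x) (gaussianReal 0 1) := by
      simpa only [eval_mul, eval_X, sub_zero] using
        (integrable_eval_gaussianReal 0 1 (X * (h * f)) :)
    have hstein := integral_sub_mul_gaussianReal (m := 0) (v := 1) (fun x => (h * f).hasDerivAt x)
      (integrable_eval_gaussianReal 0 1 _) (integrable_eval_gaussianReal 0 1 _)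
      hXhf
    simp only [← eval_map_algebraMap, ← hh] at ih
    simp only [← eval_map_algebraMap, hherm, Function.iterate_succ_apply, ← ih]
    have hsum := integral_add (integrable_eval_gaussianReal 0 1 (derivative h * f))
      (integrable_eval_gaussianReal 0 1 (h * derivative f))
    have hdiff := integral_sub (integrable_eval_gaussianReal 0 1 (X * (h * f)))
      (integrable_eval_gaussianReal 0 1 (derivative h * f))
    simp only [sub_zero, NNReal.coe_one, one_mul, derivative_mul, eval_add, eval_mul, eval_X,
      eval_sub, sub_mul, mul_assoc] at hstein hsum hdiff ⊢
    linarith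

theorem iterate_derivative_comp_C_mul_X_add_C {R : Type*} [CommSemiring R] (f : R[X]) (a b : R)
    (q : ℕ) : derivative^[q] (f.comp (C a * X + C b))
      = C (a ^ q) * (derivative^[q] f).comp (C a * X + C b) := by
  induction q generalizing f with
  | zero => simp
  | succ q ih =>
    simp only [Function.iterate_succ_apply, derivative_comp, derivative_add, derivative_C_mul,
      derivative_X, derivative_C, add_zero, mul_one, iterate_derivative_C_mul, ih, pow_succ, C_mul]
    ring

theorem integral_comp_eq_integral_integral_of_indepFun {Ω 𝓧 𝓨 E : Type*} [MeasurableSpace Ω]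
    [MeasurableSpace 𝓧] [MeasurableSpace 𝓨] [NormedAddCommGroup E] [NormedSpace ℝ E]
    {μ : Measure Ω} [IsFiniteMeasure μ] {P : Measure 𝓧} [SFinite P] {X : Ω → 𝓧} {W : Ω → 𝓨}
    (hX : HasLaw X P μ) (hW : AEMeasurable W μ) (hXW : IndepFun X W μ) {F : 𝓧 × 𝓨 → E}
    (hF : StronglyMeasurable F) (hFi : Integrable (fun ω => F (X ω, W ω)) μ) :
    ∫ ω, F (X ω, W ω) ∂μ = ∫ ω, ∫ x, F (x, W ω) ∂P ∂μ := by
  have hmap : μ.map (fun ω => (X ω, W ω)) = P.prod (μ.map W) := by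
    rw [(indepFun_iff_map_prod_eq_prod_map_map hX.aemeasurable hW).1 hXW, hX.map_eq]
  have hm : AEMeasurable (fun ω => (X ω, W ω)) μ := hX.aemeasurable.prodMk hW
  have hFprod : Integrable F (P.prod (μ.map W)) := by
    rwa [← hmap, integrable_map_measure hF.aestronglyMeasurable hm]
  calc ∫ ω, F (X ω, W ω) ∂μ = ∫ z, F z ∂P.prod (μ.map W) := by
        rw [← hmap, integral_map hm hF.aestronglyMeasurable]
    _ = ∫ w, ∫ x, F (x, w) ∂P ∂μ.map W := integral_prod_symm _ hFprod
    _ = ∫ ω, ∫ x, F (x, W ω) ∂P ∂μ := integral_map hW hF.integral_prod_left'.aestronglyMeasurable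

theorem integral_hermite_mul_eval_add {Ω : Type*} [MeasurableSpace Ω] {μ : Measure Ω}
    {X W : Ω → ℝ} (hX : HasLaw X (gaussianReal 0 1) μ) (hXW : IndepFun X W μ)
    (hW : ∀ k : ℕ, MemLp W k μ) (ρ : ℝ) (q : ℕ) (f : ℝ[X]) :
    ∫ ω, aeval (X ω) (hermite q) * f.eval (ρ * X ω + W ω) ∂μ
      = ρ ^ q * ∫ ω, (derivative^[q] f).eval (ρ * X ω + W ω) ∂μ := by
  have := hX.isProbabilityMeasure
  have hXk : ∀ k : ℕ, MemLp X k μ := fun k => by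
    have hid := memLp_id_gaussianReal' (μ := 0) (v := 1) k (by simp)
    rwa [← hX.map_eq, memLp_map_measure_iff (by fun_prop) hX.aemeasurable] at hid
  have hYk : ∀ k : ℕ, MemLp (fun ω => ρ * X ω + W ω) k μ := fun k =>
    ((hXk k).const_mul ρ).add (hW k)
  have hfubini : ∀ g h : ℝ[X], ∫ ω, g.eval (X ω) * h.eval (ρ * X ω + W ω) ∂μ
      = ∫ ω, ∫ x, g.eval x * h.eval (ρ * x + W ω) ∂gaussianReal 0 1 ∂μ := fun g h =>
    integral_comp_eq_integral_integral_of_indepFun hX (hW 0).1.aemeasurable hXW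
      (F := fun z => g.eval z.1 * h.eval (ρ * z.1 + z.2))
      (by have := g.continuous; have := h.continuous
          exact Continuous.stronglyMeasurable (by fun_prop))
      ((memLp_two_eval hXk g).integrable_mul (memLp_two_eval hYk h))
  have hinner : ∀ w, ∫ x, aeval x (hermite q) * f.eval (ρ * x + w) ∂gaussianReal 0 1
      = ρ ^ q * ∫ x, (derivative^[q] f).eval (ρ * x + w) ∂gaussianReal 0 1 := fun w => by
    simpa [iterate_derivative_comp_C_mul_X_add_C, integral_const_mul] using
      (integral_hermite_mul_gaussianReal q (f.comp (C ρ * Polynomial.X + C w)) :)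
  have hleft := hfubini ((hermite q).map (algebraMap ℤ ℝ)) f
  have hright := hfubini 1 (derivative^[q] f)
  simp only [eval_map_algebraMap, eval_one, one_mul] at hleft hright
  simp only [hleft, hright, hinner, integral_const_mul]

theorem iterate_derivative_hermite (q : ℕ) : derivative^[q] (hermite q) = (q.factorial : ℤ[X]) := by
  have hdeg : (derivative^[q] (hermite q)).natDegree ≤ 0 :=
    (natDegree_iterate_derivative _ _).trans (by simp)
  rw [eq_C_of_natDegree_le_zero hdeg, coeff_iterate_derivative]
  simp [Nat.descFactorial_self]

theorem indepFun_sub_const_mul_of_covariance_eq {Ω : Type*} [MeasurableSpace Ω] {μ : Measure Ω}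
    {X Y : Ω → ℝ} (hXY : HasGaussianLaw (fun ω => (X ω, Y ω)) μ) {ρ : ℝ}
    (hρ : cov[X, Y; μ] = ρ * Var[X; μ]) : IndepFun X (fun ω => Y ω - ρ * X ω) μ := by
  have := hXY.isProbabilityMeasure
  have hXW : HasGaussianLaw (fun ω => (X ω, Y ω - ρ * X ω)) μ := by
    simpa using hXY.map_fun ((ContinuousLinearMap.fst ℝ ℝ ℝ).prod
      (ContinuousLinearMap.snd ℝ ℝ ℝ - ρ • ContinuousLinearMap.fst ℝ ℝ ℝ))
  have hX := hXY.fst.memLp_two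
  refine hXW.indepFun_of_covariance_eq_zero ?_
  rw [covariance_fun_sub_right hX hXY.snd.memLp_two (hX.const_mul ρ),
    covariance_const_mul_right, covariance_self hX.aemeasurable, hρ, sub_self]

theorem integral_hermite_mul_hermite {Ω : Type*} [MeasurableSpace Ω] {μ : Measure Ω} {X Y : Ω → ℝ}
    (hXY : HasGaussianLaw (fun ω => (X ω, Y ω)) μ) (hX : HasLaw X (gaussianReal 0 1) μ) (q : ℕ) :
    ∫ ω, aeval (X ω) (hermite q) * aeval (Y ω) (hermite q) ∂μ
      = q.factorial * (∫ ω, X ω * Y ω ∂μ) ^ q := by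
  have := hXY.isProbabilityMeasure
  set ρ := ∫ ω, X ω * Y ω ∂μ with hρ
  have hcov : cov[X, Y; μ] = ρ * Var[X; μ] := by
    rw [covariance_eq_sub hXY.fst.memLp_two hXY.snd.memLp_two, hX.integral_eq, hX.variance_eq]
    simp [hρ]
  have hW : ∀ k : ℕ, MemLp (fun ω => Y ω - ρ * X ω) k μ := fun k =>
    (hXY.snd.memLp (by simp)).sub ((hXY.fst.memLp (by simp)).const_mul ρ)
  have h := integral_hermite_mul_eval_add hX (indepFun_sub_const_mul_of_covariance_eq hXY hcov) hW
    ρ q ((hermite q).map (algebraMap ℤ ℝ))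
  simpa only [iterate_derivative_map, iterate_derivative_hermite, eval_map_algebraMap,
    add_sub_cancel, map_natCast, integral_const, probReal_univ, one_smul,
    mul_comm (_ ^ q)] using h

end Gaussian

/-! ### Integrals of the kernel `|x - y| ^ r` -/

theorem hasDerivAt_abs_rpow_mul_self (r : ℝ) {z : ℝ} (hz : z ≠ 0) :
    HasDerivAt (fun z => |z| ^ r * z) ((r + 1) * |z| ^ r) z := by
  have hz' : |z| ≠ 0 := abs_ne_zero.2 hz
  refine (((hasDerivAt_abs hz).rpow_const (p := r) (.inl hz')).mul (hasDerivAt_id z)).congr_deriv ?_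
  calc _ = r * (|z| ^ (r - 1) * (SignType.sign z * z)) + |z| ^ r := by simp only [id]; ring
    _ = _ := by rw [sign_mul_self, ← rpow_add_one hz', sub_add_cancel]; ring

theorem continuous_abs_rpow_mul_self {r : ℝ} (hr : -1 < r) :
    Continuous fun z : ℝ => |z| ^ r * z := by
  refine continuous_iff_continuousAt.2 fun z => ?_
  rcases eq_or_ne z 0 with rfl | hz
  · have hlim : Tendsto (fun z : ℝ => |z| ^ (r + 1)) (𝓝 0) (𝓝 0) := by
      have : ContinuousAt (fun z : ℝ => |z| ^ (r + 1)) 0 :=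
        continuous_abs.continuousAt.rpow_const (.inr (by linarith))
      simpa [ContinuousAt, zero_rpow (by linarith : r + 1 ≠ 0)] using this
    rw [ContinuousAt, mul_zero]
    refine squeeze_zero_norm (fun z => ?_) hlim
    rcases eq_or_ne z 0 with rfl | hz
    · simp [zero_rpow (by linarith : r + 1 ≠ 0)]
    · rw [rpow_add_one (abs_ne_zero.2 hz), norm_mul, norm_eq_abs, norm_eq_abs,
        abs_of_nonneg (by positivity : 0 ≤ |z| ^ r)]
  · exact (hasDerivAt_abs_rpow_mul_self r hz).continuousAt

theorem intervalIntegrable_abs_rpow {r : ℝ} (hr : -1 < r) (a b : ℝ) :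
    IntervalIntegrable (fun u : ℝ => |u| ^ r) volume a b := by
  have hpos : ∀ c, 0 ≤ c → IntervalIntegrable (fun u : ℝ => |u| ^ r) volume 0 c := fun c hc => by
    refine (intervalIntegral.intervalIntegrable_rpow' hr).congr fun u hu => ?_
    rw [Set.uIoc_of_le hc] at hu
    simp only [abs_of_pos hu.1]
  have hzero : ∀ c, IntervalIntegrable (fun u : ℝ => |u| ^ r) volume 0 c := fun c => by
    rcases le_total 0 c with hc | hc
    · exact hpos c hc
    · simpa using (IntervalIntegrable.iff_comp_neg (by simp)).1 (hpos (-c) (by linarith))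
  exact (hzero a).symm.trans (hzero b)

theorem integral_abs_rpow {r : ℝ} (hr : -1 < r) {a b : ℝ} (hab : a ≤ b) :
    ∫ u in a..b, |u| ^ r = (|b| ^ r * b - |a| ^ r * a) / (r + 1) := by
  rw [eq_div_iff (by linarith), mul_comm, ← intervalIntegral.integral_const_mul]
  exact integral_eq_of_hasDerivAt_off_countable_of_le (fun z => |z| ^ r * z) _ hab
    (Set.countable_singleton 0) (continuous_abs_rpow_mul_self hr).continuousOn
    (fun x hx => hasDerivAt_abs_rpow_mul_self r hx.2)
    ((intervalIntegrable_abs_rpow hr a b).const_mul _)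

theorem integral_abs_rpow_le_of_two_mul_le_abs {r : ℝ} (hr : -1 < r) (hr0 : r ≤ 0) {a b w : ℝ}
    (hw : w ∈ Set.Icc a b) (hw0 : w ≠ 0) (h : 2 * (b - a) ≤ |w|) :
    ∫ u in a..b, |u| ^ r ≤ 2 * (b - a) * |w| ^ r := by
  have hw' : 0 < |w| := abs_pos.2 hw0
  have hbound : ∀ u ∈ Set.Icc a b, |u| ^ r ≤ 2 * |w| ^ r := fun u hu => by
    have hwu : |w| / 2 ≤ |u| := by
      have := abs_sub_abs_le_abs_sub w u
      have := abs_sub_le_of_le_of_le hw.1 hw.2 hu.1 hu.2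
      linarith
    calc |u| ^ r ≤ (|w| / 2) ^ r := rpow_le_rpow_of_nonpos (by positivity) hwu hr0
      _ = 2 ^ (-r) * |w| ^ r := by
        rw [div_rpow hw'.le zero_le_two, rpow_neg zero_le_two]; ring
      _ ≤ 2 ^ (1 : ℝ) * |w| ^ r := by gcongr <;> linarith
      _ = 2 * |w| ^ r := by rw [rpow_one]
  have hab := hw.1.trans hw.2
  calc ∫ u in a..b, |u| ^ r ≤ ∫ _ in a..b, 2 * |w| ^ r :=
        intervalIntegral.integral_mono_on hab (intervalIntegrable_abs_rpow hr a b) (by simp) hbound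
    _ = 2 * (b - a) * |w| ^ r := by rw [intervalIntegral.integral_const, smul_eq_mul]; ring

theorem integral_abs_rpow_le_of_abs_le_two_mul {r : ℝ} (hr : -1 < r) (hr0 : r ≤ 0) {a b w : ℝ}
    (hw : w ∈ Set.Icc a b) (hw0 : w ≠ 0) (h : |w| ≤ 2 * (b - a)) :
    ∫ u in a..b, |u| ^ r ≤ 6 / (r + 1) * (b - a) * |w| ^ r := by
  have hw' : 0 < |w| := abs_pos.2 hw0
  have hR : 0 < 3 * (b - a) := by linarith
  have hr1 : 0 < r + 1 := by linarith
  obtain ⟨hlo, hhi⟩ := abs_le.1 h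
  calc ∫ u in a..b, |u| ^ r ≤ ∫ u in -(3 * (b - a))..3 * (b - a), |u| ^ r :=
        intervalIntegral.integral_mono_interval (by linarith [hw.1, hw.2]) (hw.1.trans hw.2)
          (by linarith [hw.1, hw.2]) (.of_forall fun u => by positivity)
          (intervalIntegrable_abs_rpow hr _ _)
    _ = 6 / (r + 1) * (b - a) * (3 * (b - a)) ^ r := by
        rw [integral_abs_rpow hr (by linarith), abs_neg, abs_of_pos hR]; ring
    _ ≤ 6 / (r + 1) * (b - a) * |w| ^ r := by
        have := rpow_le_rpow_of_nonpos hw' (by linarith : |w| ≤ 3 * (b - a)) hr0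
        have : 0 ≤ b - a := by linarith
        gcongr

theorem integral_abs_sub_rpow_le {r : ℝ} (hr : -1 < r) (hr0 : r ≤ 0) {a b x y : ℝ}
    (hx : x ∈ Set.Icc a b) (hxy : x ≠ y) :
    ∫ u in a..b, |u - y| ^ r ≤ 6 / (r + 1) * (b - a) * |x - y| ^ r := by
  have hw : x - y ∈ Set.Icc (a - y) (b - y) := ⟨by linarith [hx.1], by linarith [hx.2]⟩
  have hw0 := sub_ne_zero.2 hxy
  rw [intervalIntegral.integral_comp_sub_right (fun u => |u| ^ r), ← sub_sub_sub_cancel_right b a y]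
  rcases le_total |x - y| (2 * (b - y - (a - y))) with hnear | hfar
  · exact integral_abs_rpow_le_of_abs_le_two_mul hr hr0 hw hw0 hnear
  · refine (integral_abs_rpow_le_of_two_mul_le_abs hr hr0 hw hw0 hfar).trans ?_
    have : 2 ≤ 6 / (r + 1) := (le_div_iff₀ (by linarith)).2 (by linarith)
    have : 0 ≤ b - y - (a - y) := by linarith [hx.1, hx.2]
    gcongr

theorem integrableOn_abs_sub_rpow {r : ℝ} (hr : -1 < r) (a b c d : ℝ) :
    IntegrableOn (fun z : ℝ × ℝ => |z.1 - z.2| ^ r) (Set.Ico a b ×ˢ Set.Ico c d) := by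
  -- On the rectangle the kernel is the convolution integrand of two compactly supported functions.
  have hf : IntegrableOn (fun _ : ℝ => (1 : ℝ)) (Set.Ico c d) := by simp
  have hg : IntegrableOn (fun u : ℝ => |u| ^ r) (Set.Icc (a - d) (b - c)) := by
    rcases le_or_gt (a - d) (b - c) with h | h
    · exact (intervalIntegrable_iff_integrableOn_Icc_of_le h).1 (intervalIntegrable_abs_rpow hr _ _)
    · simp [Set.Icc_eq_empty_of_lt h]
  have hconv := (hf.integrable_indicator measurableSet_Ico).convolution_integrand
    (ContinuousLinearMap.mul ℝ ℝ) (hg.integrable_indicator measurableSet_Icc)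
  refine hconv.integrableOn.congr_fun (fun z hz => ?_) (measurableSet_Ico.prod measurableSet_Ico)
  have hz' : z.1 - z.2 ∈ Set.Icc (a - d) (b - c) :=
    ⟨by linarith [hz.1.1, hz.2.2], by linarith [hz.1.2, hz.2.1]⟩
  simp [Set.indicator_of_mem hz.2, Set.indicator_of_mem hz']

theorem setIntegral_prod_Ico {E : Type*} [NormedAddCommGroup E] [NormedSpace ℝ E] {f : ℝ × ℝ → E}
    {a b c d : ℝ} (hab : a ≤ b) (hcd : c ≤ d)
    (hf : IntegrableOn f (Set.Ico a b ×ˢ Set.Ico c d)) :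
    ∫ z in Set.Ico a b ×ˢ Set.Ico c d, f z = ∫ x in a..b, ∫ y in c..d, f (x, y) := by
  simp only [intervalIntegral.integral_of_le hab, intervalIntegral.integral_of_le hcd,
    ← integral_Ico_eq_integral_Ioc]
  exact setIntegral_prod f hf

theorem setIntegral_abs_sub_rpow_le {r : ℝ} (hr : -1 < r) (hr0 : r ≤ 0) {a b c d x y : ℝ}
    (hx : x ∈ Set.Icc a b) (hy : y ∈ Set.Icc c d) (hxy : x ≠ y) :
    ∫ z in Set.Ico a b ×ˢ Set.Ico c d, |z.1 - z.2| ^ r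
      ≤ (6 / (r + 1)) ^ 2 * ((b - a) * (d - c)) * |x - y| ^ r := by
  have hab := hx.1.trans hx.2
  have hcd := hy.1.trans hy.2
  have hinner : ∀ u ≠ y, ∫ v in c..d, |u - v| ^ r ≤ 6 / (r + 1) * (d - c) * |u - y| ^ r :=
    fun u hu => by
      simpa only [abs_sub_comm] using integral_abs_sub_rpow_le hr hr0 hy hu.symm
  have hint := integrableOn_abs_sub_rpow hr a b c d
  have hint_inner : IntervalIntegrable (fun u => ∫ v in c..d, |u - v| ^ r) volume a b := by
    rw [intervalIntegrable_iff_integrableOn_Ico_of_le hab]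
    simp only [intervalIntegral.integral_of_le hcd, ← integral_Ico_eq_integral_Ioc]
    rw [IntegrableOn, Measure.volume_eq_prod, ← Measure.prod_restrict] at hint
    exact hint.integral_prod_left
  have hint_outer : IntervalIntegrable (fun u : ℝ => |u - y| ^ r) volume a b := by
    simpa using (intervalIntegrable_abs_rpow hr (a - y) (b - y)).comp_sub_right y
  calc ∫ z in Set.Ico a b ×ˢ Set.Ico c d, |z.1 - z.2| ^ r
      = ∫ u in a..b, ∫ v in c..d, |u - v| ^ r := setIntegral_prod_Ico hab hcd hint
    _ ≤ ∫ u in a..b, 6 / (r + 1) * (d - c) * |u - y| ^ r :=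
        intervalIntegral.integral_mono_ae hab hint_inner (hint_outer.const_mul _)
          ((Measure.ae_ne volume y).mono hinner)
    _ = 6 / (r + 1) * (d - c) * ∫ u in a..b, |u - y| ^ r :=
        intervalIntegral.integral_const_mul _ _
    _ ≤ 6 / (r + 1) * (d - c) * (6 / (r + 1) * (b - a) * |x - y| ^ r) := by
        have : 0 ≤ d - c := sub_nonneg.2 hcd
        have : 0 < r + 1 := by linarith
        gcongr
        exact integral_abs_sub_rpow_le hr hr0 hx hxy
    _ = _ := by ring

theorem integral_abs_rpow_mul_self {p : ℝ} (hp : 1 < p) (a b : ℝ) :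
    ∫ u in a..b, |u| ^ (p - 2) * u = (|b| ^ p - |a| ^ p) / p := by
  rw [eq_div_iff (by linarith), mul_comm, ← intervalIntegral.integral_const_mul]
  simp only [← mul_assoc]
  refine intervalIntegral.integral_eq_sub_of_hasDerivAt (fun u _ => hasDerivAt_abs_rpow u hp) ?_
  simpa only [mul_assoc] using
    ((continuous_abs_rpow_mul_self (by linarith)).const_mul p).intervalIntegrable a b

theorem mul_setIntegral_abs_sub_rpow {p : ℝ} (hp : 1 < p) {a b c d : ℝ} (hab : a ≤ b)
    (hcd : c ≤ d) :
    p * (p - 1) * ∫ z in Set.Ico a b ×ˢ Set.Ico c d, |z.1 - z.2| ^ (p - 2)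
      = |b - c| ^ p + |a - d| ^ p - |b - d| ^ p - |a - c| ^ p := by
  have hr : -1 < p - 2 := by linarith
  have hinner : ∀ u, ∫ v in c..d, |u - v| ^ (p - 2)
      = (|u - c| ^ (p - 2) * (u - c) - |u - d| ^ (p - 2) * (u - d)) / (p - 1) := fun u => by
    rw [intervalIntegral.integral_comp_sub_left (fun w => |w| ^ (p - 2)),
      integral_abs_rpow hr (by linarith), (by ring : p - 2 + 1 = p - 1)]
  have houter : ∀ e, ∫ u in a..b, |u - e| ^ (p - 2) * (u - e)
      = (|b - e| ^ p - |a - e| ^ p) / p := fun e => by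
    rw [intervalIntegral.integral_comp_sub_right (fun u => |u| ^ (p - 2) * u),
      integral_abs_rpow_mul_self hp]
  have hint : ∀ e, IntervalIntegrable (fun u => |u - e| ^ (p - 2) * (u - e)) volume a b :=
    fun e => ((continuous_abs_rpow_mul_self hr).comp
      (continuous_sub_right e)).intervalIntegrable _ _
  rw [setIntegral_prod_Ico hab hcd (integrableOn_abs_sub_rpow hr a b c d)]
  simp only [hinner]
  rw [intervalIntegral.integral_div, intervalIntegral.integral_sub (hint c) (hint d),
    houter, houter]
  have : p ≠ 0 := by linarith
  have : p - 1 ≠ 0 := by linarith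
  field_simp
  ring

/-! ### Grid averages of the kernel -/

/-- The `k`-th cell `[k/n, (k+1)/n)` of the uniform grid of mesh `1/n`. -/
def gridCell (n k : ℕ) : Set ℝ := Set.Ico ((k : ℝ) / n) (((k : ℝ) + 1) / n)

theorem measurableSet_gridCell (n k : ℕ) : MeasurableSet (gridCell n k) := measurableSet_Ico

theorem mem_gridCell_iff {n : ℕ} (hn : n ≠ 0) {x : ℝ} (hx : 0 ≤ x) (k : ℕ) :
    x ∈ gridCell n k ↔ ⌊n * x⌋₊ = k := by
  have hn' : (0 : ℝ) < n := by positivity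
  rw [Nat.floor_eq_iff (by positivity), gridCell, Set.mem_Ico, div_le_iff₀' hn', lt_div_iff₀' hn']

theorem nonneg_of_mem_gridCell {n k : ℕ} {x : ℝ} (hx : x ∈ gridCell n k) : 0 ≤ x :=
  le_trans (by positivity) hx.1

theorem mem_gridCell_floor {n : ℕ} (hn : n ≠ 0) {x : ℝ} (hx : 0 ≤ x) :
    x ∈ gridCell n ⌊n * x⌋₊ :=
  (mem_gridCell_iff hn hx _).2 rfl

theorem volume_real_gridCell_prod (n m k l : ℕ) :
    volume.real (gridCell n k ×ˢ gridCell m l) = 1 / (n * m) := by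
  have h (n k : ℕ) : volume.real (gridCell n k) = 1 / n := by
    rw [gridCell, Real.volume_real_Ico_of_le (by gcongr; linarith), ← sub_div, add_sub_cancel_left]
  rw [Measure.volume_eq_prod, measureReal_prod_prod, h, h, one_div_mul_one_div]

theorem biUnion_gridCell_prod {n m : ℕ} (hn : n ≠ 0) (hm : m ≠ 0) :
    ⋃ p ∈ Finset.range n ×ˢ Finset.range m, gridCell n p.1 ×ˢ gridCell m p.2
      = Set.Ico (0 : ℝ) 1 ×ˢ Set.Ico (0 : ℝ) 1 := by
  have floor_lt_iff {n : ℕ} (hn : n ≠ 0) {x : ℝ} (hx : 0 ≤ x) : ⌊n * x⌋₊ < n ↔ x < 1 := by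
    rw [Nat.floor_lt (by positivity), mul_lt_iff_lt_one_right (by positivity)]
  ext ⟨x, y⟩
  simp only [Set.mem_iUnion, Finset.mem_product, Finset.mem_range, Set.mem_prod, exists_prop,
    Prod.exists]
  constructor
  · rintro ⟨k, l, ⟨hk, hl⟩, hx, hy⟩
    have hx0 := nonneg_of_mem_gridCell hx
    have hy0 := nonneg_of_mem_gridCell hy
    rw [← (mem_gridCell_iff hn hx0 k).1 hx, floor_lt_iff hn hx0] at hk
    rw [← (mem_gridCell_iff hm hy0 l).1 hy, floor_lt_iff hm hy0] at hl
    exact ⟨⟨hx0, hk⟩, hy0, hl⟩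
  · rintro ⟨⟨hx0, hx1⟩, hy0, hy1⟩
    exact ⟨_, _, ⟨(floor_lt_iff hn hx0).2 hx1, (floor_lt_iff hm hy0).2 hy1⟩,
      mem_gridCell_floor hn hx0, mem_gridCell_floor hm hy0⟩

theorem setIntegral_comp_floor {n m : ℕ} (hn : n ≠ 0) (hm : m ≠ 0) (f : ℕ → ℕ → ℝ) :
    ∫ z in Set.Ico (0 : ℝ) 1 ×ˢ Set.Ico (0 : ℝ) 1, f ⌊n * z.1⌋₊ ⌊m * z.2⌋₊
      = ∑ k ∈ Finset.range n, ∑ l ∈ Finset.range m, f k l / (n * m) := by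
  have hmeas (p : ℕ × ℕ) : MeasurableSet (gridCell n p.1 ×ˢ gridCell m p.2) :=
    (measurableSet_gridCell n p.1).prod (measurableSet_gridCell m p.2)
  have heq (p : ℕ × ℕ) : Set.EqOn (fun z : ℝ × ℝ => f ⌊n * z.1⌋₊ ⌊m * z.2⌋₊)
      (fun _ => f p.1 p.2) (gridCell n p.1 ×ˢ gridCell m p.2) := fun z hz => by
    simp only [(mem_gridCell_iff hn (nonneg_of_mem_gridCell hz.1) _).1 hz.1,
      (mem_gridCell_iff hm (nonneg_of_mem_gridCell hz.2) _).1 hz.2]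
  have hint (p : ℕ × ℕ) : IntegrableOn (fun z : ℝ × ℝ => f ⌊n * z.1⌋₊ ⌊m * z.2⌋₊)
      (gridCell n p.1 ×ˢ gridCell m p.2) := by
    rw [integrableOn_congr_fun (heq p) (hmeas p)]
    exact integrableOn_const (by simp [Measure.volume_eq_prod, gridCell, ENNReal.mul_eq_top])
  have hdisj : Pairwise (Function.onFun Disjoint
      fun p : ℕ × ℕ => gridCell n p.1 ×ˢ gridCell m p.2) := fun p p' hne =>
    Set.disjoint_left.2 fun z hz hz' => hne <| Prod.ext
      (((mem_gridCell_iff hn (nonneg_of_mem_gridCell hz.1) _).1 hz.1).symm.trans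
        ((mem_gridCell_iff hn (nonneg_of_mem_gridCell hz.1) _).1 hz'.1))
      (((mem_gridCell_iff hm (nonneg_of_mem_gridCell hz.2) _).1 hz.2).symm.trans
        ((mem_gridCell_iff hm (nonneg_of_mem_gridCell hz.2) _).1 hz'.2))
  rw [← biUnion_gridCell_prod hn hm, integral_biUnion_finset _ (fun p _ => hmeas p)
    (hdisj.set_pairwise _) fun p _ => hint p, Finset.sum_product]
  refine Finset.sum_congr rfl fun k _ => Finset.sum_congr rfl fun l _ => ?_
  rw [setIntegral_congr_fun (hmeas (k, l)) (heq (k, l)), setIntegral_const,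
    volume_real_gridCell_prod, smul_eq_mul, one_div_mul_eq_div]

/-- The mean of the kernel `|u - v| ^ r` over the cell `(k, l)` of the grid of mesh
`1/n × 1/m`. -/
noncomputable def cellAverage (r : ℝ) (n m k l : ℕ) : ℝ :=
  ⨍ z in gridCell n k ×ˢ gridCell m l, |z.1 - z.2| ^ r

theorem cellAverage_eq (r : ℝ) (n m k l : ℕ) :
    cellAverage r n m k l
      = n * m * ∫ z in gridCell n k ×ˢ gridCell m l, |z.1 - z.2| ^ r := by
  rw [cellAverage, setAverage_eq, volume_real_gridCell_prod, one_div, inv_inv, smul_eq_mul]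

theorem cellAverage_nonneg (r : ℝ) (n m k l : ℕ) : 0 ≤ cellAverage r n m k l := by
  rw [cellAverage_eq]
  exact mul_nonneg (by positivity) (integral_nonneg fun z => by positivity)

theorem cellAverage_le {r : ℝ} (hr : -1 < r) (hr0 : r ≤ 0) {n m k l : ℕ} (hn : n ≠ 0) (hm : m ≠ 0)
    {x y : ℝ} (hx : x ∈ gridCell n k) (hy : y ∈ gridCell m l) (hxy : x ≠ y) :
    cellAverage r n m k l ≤ (6 / (r + 1)) ^ 2 * |x - y| ^ r := by
  rw [cellAverage_eq]
  calc _ ≤ n * m * ((6 / (r + 1)) ^ 2 * (((k + 1) / n - k / n) * ((l + 1) / m - l / m))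
          * |x - y| ^ r) := by
        gcongr
        exact setIntegral_abs_sub_rpow_le hr hr0 (Set.Ico_subset_Icc_self hx)
          (Set.Ico_subset_Icc_self hy) hxy
    _ = _ := by field_simp; ring

theorem tendsto_gridCell_smallSets {x : ℝ} (hx : 0 ≤ x) :
    Tendsto (fun n : ℕ => gridCell n ⌊n * x⌋₊) atTop (𝓝 x).smallSets := by
  have hinv : Tendsto (fun n : ℕ => (1 : ℝ) / n) atTop (𝓝 0) := tendsto_one_div_atTop_nhds_zero_nat
  have hlo : Tendsto (fun n : ℕ => x - 1 / n) atTop (𝓝 x) := by simpa using hinv.const_sub x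
  have hhi : Tendsto (fun n : ℕ => x + 1 / n) atTop (𝓝 x) := by simpa using hinv.const_add x
  refine (hlo.Icc hhi).smallSets_mono ?_
  filter_upwards [eventually_ne_atTop 0] with n hn u hu
  obtain ⟨hxlo, hxhi⟩ := mem_gridCell_floor hn hx
  obtain ⟨hulo, huhi⟩ := hu
  rw [add_div] at hxhi huhi
  exact ⟨by linarith, by linarith⟩

theorem tendsto_setAverage {X E ι : Type*} [TopologicalSpace X] [MeasurableSpace X]
    [OpensMeasurableSpace X] [NormedAddCommGroup E] [NormedSpace ℝ E] [CompleteSpace E]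
    {μ : Measure X} [IsLocallyFiniteMeasure μ] {f : X → E} {x : X} {s : ι → Set X} {li : Filter ι}
    (hf : ContinuousAt f x) (hfm : StronglyMeasurableAtFilter f (𝓝 x) μ)
    (hs : Tendsto s li (𝓝 x).smallSets) (hs0 : ∀ᶠ i in li, μ.real (s i) ≠ 0) :
    Tendsto (fun i => ⨍ y in s i, f y ∂μ) li (𝓝 (f x)) := by
  rw [← tendsto_sub_nhds_zero_iff]
  refine (hf.integral_sub_linear_isLittleO_ae hfm hs).tendsto_inv_smul_nhds_zero.congr' ?_
  filter_upwards [hs0] with i hi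
  rw [smul_sub, inv_smul_smul₀ hi, setAverage_eq]

theorem eventually_ne_zero_and_ne_zero : ∀ᶠ p : ℕ × ℕ in atTop, p.1 ≠ 0 ∧ p.2 ≠ 0 := by
  rw [← prod_atTop_atTop_eq]
  exact (eventually_ne_atTop 0).prod_mk (eventually_ne_atTop 0)

theorem tendsto_cellAverage (r : ℝ) {x y : ℝ} (hx : 0 ≤ x) (hy : 0 ≤ y) (hxy : x ≠ y) :
    Tendsto (fun p : ℕ × ℕ => cellAverage r p.1 p.2 ⌊p.1 * x⌋₊ ⌊p.2 * y⌋₊) atTop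
      (𝓝 (|x - y| ^ r)) := by
  have hcont : ContinuousAt (fun z : ℝ × ℝ => |z.1 - z.2| ^ r) (x, y) :=
    ContinuousAt.rpow_const (by fun_prop) (.inl (abs_ne_zero.2 (sub_ne_zero.2 hxy)))
  have hmeas : Measurable fun z : ℝ × ℝ => |z.1 - z.2| ^ r := by fun_prop
  rw [← prod_atTop_atTop_eq]
  refine tendsto_setAverage hcont (hmeas.aestronglyMeasurable.stronglyMeasurableAtFilter) ?_ ?_
  · refine tendsto_smallSets_iff.2 fun t ht => ?_
    obtain ⟨u, hu, v, hv, huv⟩ := mem_nhds_prod_iff.1 ht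
    filter_upwards [(tendsto_smallSets_iff.1 (tendsto_gridCell_smallSets hx) u hu).prod_mk
      (tendsto_smallSets_iff.1 (tendsto_gridCell_smallSets hy) v hv)] with p hp
    exact (Set.prod_mono hp.1 hp.2).trans huv
  · rw [prod_atTop_atTop_eq]
    filter_upwards [eventually_ne_zero_and_ne_zero] with p ⟨hn, hm⟩
    rw [volume_real_gridCell_prod]
    positivity

theorem ae_mem_unitSquare_ne :
    ∀ᵐ z : ℝ × ℝ ∂volume.restrict (Set.Ico (0 : ℝ) 1 ×ˢ Set.Ico (0 : ℝ) 1),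
      z ∈ Set.Ico (0 : ℝ) 1 ×ˢ Set.Ico (0 : ℝ) 1 ∧ z.1 ≠ z.2 := by
  have hne : ∀ᵐ z : ℝ × ℝ, z.1 ≠ z.2 := by
    rw [Measure.volume_eq_prod, Measure.ae_prod_iff_ae_ae (by measurability)]
    exact .of_forall fun x => (Measure.ae_ne volume x).mono fun y hy => hy.symm
  exact (ae_restrict_mem (measurableSet_Ico.prod measurableSet_Ico)).and (ae_restrict_of_ae hne)

theorem tendsto_sum_cellAverage_pow {r : ℝ} (hr : -1 < r) (hr0 : r ≤ 0) {q : ℕ}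
    (hrq : -1 < r * q) :
    Tendsto (fun p : ℕ × ℕ => ∑ k ∈ Finset.range p.1, ∑ l ∈ Finset.range p.2,
        cellAverage r p.1 p.2 k l ^ q / (p.1 * p.2)) atTop
      (𝓝 (∫ z in Set.Ico (0 : ℝ) 1 ×ˢ Set.Ico (0 : ℝ) 1, |z.1 - z.2| ^ (r * q))) := by
  have hmeas (p : ℕ × ℕ) : Measurable fun z : ℝ × ℝ =>
      cellAverage r p.1 p.2 ⌊p.1 * z.1⌋₊ ⌊p.2 * z.2⌋₊ ^ q :=
    (measurable_of_countable fun w : ℕ × ℕ => cellAverage r p.1 p.2 w.1 w.2 ^ q).comp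
      (f := fun z : ℝ × ℝ => (⌊p.1 * z.1⌋₊, ⌊p.2 * z.2⌋₊)) (by fun_prop)
  refine Tendsto.congr' (eventually_ne_zero_and_ne_zero.mono fun p hp =>
    setIntegral_comp_floor hp.1 hp.2 fun k l => cellAverage r p.1 p.2 k l ^ q) ?_
  refine tendsto_integral_filter_of_dominated_convergence
    (fun z => ((6 / (r + 1)) ^ 2) ^ q * |z.1 - z.2| ^ (r * q))
    (.of_forall fun p => (hmeas p).aestronglyMeasurable) ?_
    ((integrableOn_abs_sub_rpow hrq 0 1 0 1).const_mul _) ?_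
  · filter_upwards [eventually_ne_zero_and_ne_zero] with p hp
    filter_upwards [ae_mem_unitSquare_ne] with z ⟨⟨hx, hy⟩, hxy⟩
    have hnonneg := cellAverage_nonneg r p.1 p.2 ⌊p.1 * z.1⌋₊ ⌊p.2 * z.2⌋₊
    rw [norm_of_nonneg (pow_nonneg hnonneg q), rpow_mul_natCast (abs_nonneg _), ← mul_pow]
    exact pow_le_pow_left₀ hnonneg (cellAverage_le hr hr0 hp.1 hp.2
      (mem_gridCell_floor hp.1 hx.1) (mem_gridCell_floor hp.2 hy.1) hxy) q
  · filter_upwards [ae_mem_unitSquare_ne] with z ⟨⟨hx, hy⟩, hxy⟩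
    rw [rpow_mul_natCast (abs_nonneg _)]
    exact (tendsto_cellAverage r hx.1 hy.1 hxy).pow q

theorem setIntegral_unitSquare_abs_sub_rpow_pos {r : ℝ} (hr : -1 < r) :
    0 < ∫ z in Set.Ico (0 : ℝ) 1 ×ˢ Set.Ico (0 : ℝ) 1, |z.1 - z.2| ^ r := by
  have hnonneg : ∀ z : ℝ × ℝ, 0 ≤ |z.1 - z.2| ^ r := fun z => by positivity
  have : (ae (volume.restrict (Set.Ico (0 : ℝ) 1 ×ˢ Set.Ico (0 : ℝ) 1))).NeBot :=
    ae_restrict_neBot.2 (by simp [Measure.volume_eq_prod])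
  refine (integral_nonneg hnonneg).lt_of_ne' fun hzero => ?_
  rw [integral_eq_zero_iff_of_nonneg hnonneg (integrableOn_abs_sub_rpow hr 0 1 0 1)] at hzero
  obtain ⟨z, hz, -, hne⟩ := (hzero.and ae_mem_unitSquare_ne).exists
  exact (rpow_pos_of_pos (abs_pos.2 (sub_ne_zero.2 hne)) r).ne' hz

/-! ### Fractional Brownian motion -/

/-- The increment of `B` over the `k`-th cell of the grid of mesh `1/n`, scaled to have unit
variance. -/
noncomputable def scaledIncrement {Ω : Type*} (B : ℝ → Ω → ℝ) (H : ℝ) (n k : ℕ) (ω : Ω) : ℝ :=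
  (n : ℝ) ^ H * (B (((k : ℝ) + 1) / n) ω - B ((k : ℝ) / n) ω)

theorem hermiteVariation_eq_sum_scaledIncrement {Ω : Type*} [MeasureSpace Ω] (B : ℝ → Ω → ℝ)
    (H : ℝ) (q n : ℕ) (ω : Ω) :
    hermiteVariation B H q n ω
      = ∑ k ∈ Finset.range n, Polynomial.aeval (scaledIncrement B H n k ω) (Polynomial.hermite q) :=
  rfl

namespace IsFractionalBrownianMotion

variable {Ω : Type*} [MeasureSpace Ω] {B : ℝ → Ω → ℝ} {H : ℝ}

theorem hasGaussianLaw_increments (hB : IsFractionalBrownianMotion B H) {a b c d : ℝ}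
    (ha : 0 ≤ a) (hb : 0 ≤ b) (hc : 0 ≤ c) (hd : 0 ≤ d) :
    HasGaussianLaw (fun ω => (B b ω - B a ω, B d ω - B c ω)) (ℙ : Measure Ω) := by
  have hmeas := hB.measurable
  refine ⟨isGaussian_of_map_eq_gaussianReal fun L => ?_⟩
  obtain ⟨v, hv⟩ := hB.gaussian_fdd 4 ![b, a, d, c] (by intro i; fin_cases i <;> simpa)
    ![L (1, 0), -L (1, 0), L (0, 1), -L (0, 1)]
  refine ⟨0, v, ?_⟩
  rw [Measure.map_map (by fun_prop) (by fun_prop), ← hv]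
  congr 1
  ext ω
  have hL (x y : ℝ) : L (x, y) = L (1, 0) * x + L (0, 1) * y := by
    have : ((x, y) : ℝ × ℝ) = x • (1, 0) + y • (0, 1) := by simp
    rw [this, map_add, map_smul, map_smul, smul_eq_mul, smul_eq_mul, mul_comm x, mul_comm y]
  rw [Function.comp_apply, hL]
  simp [Fin.sum_univ_four]
  ring

theorem exists_hasLaw_gaussianReal (hB : IsFractionalBrownianMotion B H) {t : ℝ} (ht : 0 ≤ t) :
    ∃ v, HasLaw (B t) (gaussianReal 0 v) (ℙ : Measure Ω) := by
  obtain ⟨v, hv⟩ := hB.gaussian_fdd 1 (fun _ => t) (fun _ => ht) (fun _ => 1)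
  simp only [Fin.sum_univ_one, one_mul] at hv
  exact ⟨v, (hB.measurable t).aemeasurable, hv⟩

theorem memLp (hB : IsFractionalBrownianMotion B H) {t : ℝ} (ht : 0 ≤ t) {p : ENNReal}
    (hp : p ≠ ⊤) : MemLp (B t) p (ℙ : Measure Ω) :=
  let ⟨_, hlaw⟩ := hB.exists_hasLaw_gaussianReal ht
  hlaw.hasGaussianLaw.memLp hp

theorem integral_eq_zero (hB : IsFractionalBrownianMotion B H) {t : ℝ} (ht : 0 ≤ t) :
    ∫ ω, B t ω ∂(ℙ : Measure Ω) = 0 :=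
  let ⟨_, hlaw⟩ := hB.exists_hasLaw_gaussianReal ht
  hlaw.integral_eq.trans integral_id_gaussianReal

theorem integral_increment_mul_increment (hB : IsFractionalBrownianMotion B H) {a b c d : ℝ}
    (ha : 0 ≤ a) (hb : 0 ≤ b) (hc : 0 ≤ c) (hd : 0 ≤ d) :
    ∫ ω, (B b ω - B a ω) * (B d ω - B c ω) ∂(ℙ : Measure Ω)
      = (|b - c| ^ (2 * H) + |a - d| ^ (2 * H) - |b - d| ^ (2 * H) - |a - c| ^ (2 * H)) / 2 := by
  have hint {s t : ℝ} (hs : 0 ≤ s) (ht : 0 ≤ t) : Integrable (fun ω => B s ω * B t ω) :=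
    (hB.memLp (p := 2) hs (by simp)).integrable_mul (hB.memLp (p := 2) ht (by simp))
  simp only [sub_mul, mul_sub]
  rw [integral_sub (.sub' (hint hb hd) (hint ha hd)) (.sub' (hint hb hc) (hint ha hc)),
    integral_sub (hint hb hd) (hint ha hd), integral_sub (hint hb hc) (hint ha hc),
    hB.covariance _ _ hb hd, hB.covariance _ _ hb hc, hB.covariance _ _ ha hd,
    hB.covariance _ _ ha hc, abs_sub_comm b c, abs_sub_comm a d, abs_sub_comm b d,
    abs_sub_comm a c]
  ring

theorem hasGaussianLaw_scaledIncrements (hB : IsFractionalBrownianMotion B H) (n m k l : ℕ) :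
    HasGaussianLaw (fun ω => (scaledIncrement B H n k ω, scaledIncrement B H m l ω))
      (ℙ : Measure Ω) := by
  have h := hB.hasGaussianLaw_increments (a := k / n) (b := (k + 1) / n) (c := l / m)
    (d := (l + 1) / m) (by positivity) (by positivity) (by positivity) (by positivity)
  simpa [scaledIncrement] using h.map_fun
    (((n : ℝ) ^ H • ContinuousLinearMap.fst ℝ ℝ ℝ).prod
      ((m : ℝ) ^ H • ContinuousLinearMap.snd ℝ ℝ ℝ))

theorem integral_scaledIncrement_sq (hB : IsFractionalBrownianMotion B H) (hH : H ≠ 0) {n : ℕ}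
    (hn : n ≠ 0) (k : ℕ) :
    ∫ ω, scaledIncrement B H n k ω ^ 2 ∂(ℙ : Measure Ω) = 1 := by
  have hlen : ((k : ℝ) + 1) / n - k / n = (n : ℝ)⁻¹ := by field_simp; ring
  have hscale : ((n : ℝ) ^ H) ^ 2 * ((n : ℝ)⁻¹) ^ (2 * H) = 1 := by
    rw [mul_comm 2 H, rpow_mul (by positivity), inv_rpow (by positivity), rpow_two, inv_pow,
      mul_inv_cancel₀ (by positivity)]
  simp only [scaledIncrement, mul_pow, integral_const_mul, sq (B _ _ - B _ _)]
  rw [hB.integral_increment_mul_increment (by positivity) (by positivity) (by positivity)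
    (by positivity), abs_sub_comm ((k : ℝ) / n), hlen, sub_self, sub_self, abs_zero,
    zero_rpow (by simpa using hH), abs_of_nonneg (by positivity)]
  linarith

theorem hasLaw_scaledIncrement (hB : IsFractionalBrownianMotion B H) (hH : H ≠ 0) {n : ℕ}
    (hn : n ≠ 0) (k : ℕ) :
    HasLaw (scaledIncrement B H n k) (gaussianReal 0 1) (ℙ : Measure Ω) := by
  have hgauss := (hB.hasGaussianLaw_scaledIncrements n n k k).fst
  have hmean : ∫ ω, scaledIncrement B H n k ω ∂(ℙ : Measure Ω) = 0 := by
    have hint {t : ℝ} (ht : 0 ≤ t) : Integrable (B t) :=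
      memLp_one_iff_integrable.1 (hB.memLp ht (by simp))
    simp only [scaledIncrement, integral_const_mul]
    rw [integral_sub (hint (by positivity)) (hint (by positivity)),
      hB.integral_eq_zero (by positivity), hB.integral_eq_zero (by positivity), sub_self, mul_zero]
  refine ⟨hgauss.aemeasurable, ?_⟩
  rw [hgauss.map_eq_gaussianReal, variance_of_integral_eq_zero hgauss.aemeasurable hmean, hmean,
    hB.integral_scaledIncrement_sq hH hn, Real.toNNReal_one]

theorem integral_scaledIncrement_mul_scaledIncrement (hB : IsFractionalBrownianMotion B H)
    (hH : 1 / 2 < H) {n m : ℕ} (hn : n ≠ 0) (hm : m ≠ 0) (k l : ℕ) :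
    ∫ ω, scaledIncrement B H n k ω * scaledIncrement B H m l ω ∂(ℙ : Measure Ω)
      = (n : ℝ) ^ (H - 1) * (m : ℝ) ^ (H - 1)
        * (H * (2 * H - 1) * cellAverage (2 * H - 2) n m k l) := by
  simp only [scaledIncrement, mul_mul_mul_comm _ (B _ _ - B _ _), integral_const_mul]
  rw [hB.integral_increment_mul_increment (by positivity) (by positivity) (by positivity)
    (by positivity), ← mul_setIntegral_abs_sub_rpow (by linarith) (by gcongr; linarith)
    (by gcongr; linarith), cellAverage_eq, rpow_sub_one (by positivity),
    rpow_sub_one (by positivity)]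
  simp only [gridCell]
  field_simp

theorem memLp_hermite_scaledIncrement (hB : IsFractionalBrownianMotion B H) (q n k : ℕ) :
    MemLp (fun ω => Polynomial.aeval (scaledIncrement B H n k ω) (Polynomial.hermite q)) 2
      (ℙ : Measure Ω) := by
  have hgauss := (hB.hasGaussianLaw_scaledIncrements n n k k).fst
  have := hgauss.isProbabilityMeasure
  simpa only [Polynomial.eval_map_algebraMap] using
    memLp_two_eval (fun j => hgauss.memLp (by simp))
      ((Polynomial.hermite q).map (algebraMap ℤ ℝ))

theorem memLp_hermiteVariation (hB : IsFractionalBrownianMotion B H) (q n : ℕ) :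
    MemLp (hermiteVariation B H q n) 2 (ℙ : Measure Ω) :=
  memLp_finsetSum _ fun k _ => hB.memLp_hermite_scaledIncrement q n k

theorem integral_hermiteVariation_mul_hermiteVariation (hB : IsFractionalBrownianMotion B H)
    (hH : 1 / 2 < H) (q : ℕ) {n m : ℕ} (hn : n ≠ 0) (hm : m ≠ 0) :
    ∫ ω, hermiteVariation B H q n ω * hermiteVariation B H q m ω ∂(ℙ : Measure Ω)
      = q.factorial * (H * (2 * H - 1)) ^ q
        * ((n : ℝ) ^ (1 - q * (1 - H)) * (m : ℝ) ^ (1 - q * (1 - H)))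
        * ∑ k ∈ Finset.range n, ∑ l ∈ Finset.range m,
          cellAverage (2 * H - 2) n m k l ^ q / (n * m) := by
  have hpow {n : ℕ} (hn : n ≠ 0) : ((n : ℝ) ^ (H - 1)) ^ q = (n : ℝ) ^ (1 - q * (1 - H)) / n := by
    rw [← rpow_mul_natCast (by positivity), ← rpow_sub_one (by positivity)]
    congr 1
    ring
  have hint (k l : ℕ) : Integrable fun ω =>
      Polynomial.aeval (scaledIncrement B H n k ω) (Polynomial.hermite q)
        * Polynomial.aeval (scaledIncrement B H m l ω) (Polynomial.hermite q) :=
    (hB.memLp_hermite_scaledIncrement q n k).integrable_mul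
      (hB.memLp_hermite_scaledIncrement q m l)
  simp only [hermiteVariation_eq_sum_scaledIncrement, Finset.sum_mul_sum]
  rw [integral_finsetSum _ fun k _ => integrable_finsetSum _ fun l _ => hint k l, Finset.mul_sum]
  refine Finset.sum_congr rfl fun k _ => ?_
  rw [integral_finsetSum _ fun l _ => hint k l, Finset.mul_sum]
  refine Finset.sum_congr rfl fun l _ => ?_
  rw [integral_hermite_mul_hermite (hB.hasGaussianLaw_scaledIncrements n m k l)
    (hB.hasLaw_scaledIncrement (by linarith) hn k),
    hB.integral_scaledIncrement_mul_scaledIncrement hH hn hm, mul_pow, mul_pow, mul_pow _ _ q,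
    hpow hn, hpow hm]
  ring

end IsFractionalBrownianMotion

/-- The constant `c_{2,q,H}` of the non-central limit theorem: the limit in `n` of the `L²` norm
of `V_n / n ^ (1 - q (1 - H))`. -/
noncomputable def hermiteVariationConst (q : ℕ) (H : ℝ) : ℝ :=
  √(q.factorial * (H * (2 * H - 1)) ^ q
    * ∫ z in Set.Ico (0 : ℝ) 1 ×ˢ Set.Ico (0 : ℝ) 1, |z.1 - z.2| ^ ((2 * H - 2) * q))

theorem hermiteVariationConst_pos {q : ℕ} {H : ℝ} (hH : 1 / 2 < H) (hHq : -1 < (2 * H - 2) * q) :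
    0 < hermiteVariationConst q H := by
  have : 0 < 2 * H - 1 := by linarith
  have : 0 < H := by linarith
  have := setIntegral_unitSquare_abs_sub_rpow_pos hHq
  exact sqrt_pos.2 (by positivity)

theorem IsFractionalBrownianMotion.tendsto_integral_hermiteVariation_mul {Ω : Type*}
    [MeasureSpace Ω] {B : ℝ → Ω → ℝ} {H : ℝ} (hB : IsFractionalBrownianMotion B H)
    (hH : 1 / 2 < H) (hH1 : H ≤ 1) {q : ℕ} (hHq : -1 < (2 * H - 2) * q) :
    Tendsto (fun p : ℕ × ℕ => ∫ ω, hermiteVariation B H q p.1 ω / (p.1 : ℝ) ^ (1 - q * (1 - H))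
        * (hermiteVariation B H q p.2 ω / (p.2 : ℝ) ^ (1 - q * (1 - H))) ∂(ℙ : Measure Ω)) atTop
      (𝓝 (hermiteVariationConst q H ^ 2)) := by
  rw [hermiteVariationConst, sq_sqrt (sqrt_pos.1 (hermiteVariationConst_pos hH hHq)).le]
  refine ((tendsto_sum_cellAverage_pow (by linarith) (by linarith) hHq).const_mul _).congr' ?_
  filter_upwards [eventually_ne_zero_and_ne_zero] with p ⟨hn, hm⟩
  simp only [div_mul_div_comm, integral_div]
  rw [hB.integral_hermiteVariation_mul_hermiteVariation hH q hn hm]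
  field_simp

theorem stmt_1_general {Ω : Type*} [MeasureSpace Ω] {q : ℕ} (hq : q ≠ 0) {H : ℝ}
    (hH0 : 1 - 1 / (2 * q) < H) (hH1 : H ≤ 1) {B : ℝ → Ω → ℝ}
    (hB : IsFractionalBrownianMotion B H) :
    0 < hermiteVariationConst q H ∧
      ∃ Z : Ω → ℝ, (∫ ω, (Z ω) ^ 2 ∂(ℙ : Measure Ω)) = 1 ∧
        Tendsto
          (fun n : ℕ => eLpNorm
            (fun ω => hermiteVariation B H q n ω
              / (hermiteVariationConst q H * (n : ℝ) ^ (1 - q * (1 - H))) - Z ω)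
            2 (ℙ : Measure Ω))
          atTop (𝓝 0) := by
  have hq1 : (1 : ℝ) ≤ q := by exact_mod_cast Nat.one_le_iff_ne_zero.2 hq
  have hgap : (1 - H) * (2 * q) < 1 := (lt_div_iff₀ (by positivity)).1 (by linarith)
  have hH : 1 / 2 < H := by nlinarith
  have hHq : -1 < (2 * H - 2) * q := by linarith
  have hc := hermiteVariationConst_pos hH hHq
  refine ⟨hc, exists_tendsto_eLpNorm_of_tendsto_integral_mul (fun n => ?_) ?_⟩
  · exact (hB.memLp_hermiteVariation q n).mul_const _
  · have hlim := (hB.tendsto_integral_hermiteVariation_mul hH hH1 hHq).div_const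
      (hermiteVariationConst q H ^ 2)
    rw [div_self (by positivity)] at hlim
    refine hlim.congr fun p => ?_
    rw [← integral_div]
    congr! 2
    field_simp

theorem stmt_1 {Ω : Type*} [MeasureSpace Ω] [IsProbabilityMeasure (ℙ : Measure Ω)]
    (q : ℕ) (hq : 2 ≤ q) (H : ℝ) (hH0 : 1 - 1 / (2 * q) < H) (hH1 : H < 1)
    (B : ℝ → Ω → ℝ) (hB : IsFractionalBrownianMotion B H) :
    ∃ (c : ℝ) (Z : Ω → ℝ), 0 < c ∧ (∫ ω, (Z ω) ^ 2 ∂(ℙ : Measure Ω)) = 1 ∧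
      Tendsto
        (fun n : ℕ => eLpNorm
          (fun ω => hermiteVariation B H q n ω / (c * (n : ℝ) ^ (1 - q * (1 - H))) - Z ω)
          2 (ℙ : Measure Ω))
        atTop (𝓝 0) := by
  obtain ⟨hc, Z, hZ⟩ := stmt_1_general (by lia) hH0 hH1.le hB
  exact ⟨_, Z, hc, hZ⟩
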